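/- For all integers r,q ≥ 1 (note N = 2(r+1)(q+1) − 1 is symmetric in r and q), the permutations σ_{rq} and σ_{qr} are trivially equivalent under rotation composed with inversion: σ_{qr} = κ ∘ σ_{rq}^{−1} ∘ κ, where κ is the flip involution κ(a) = N+1−a of {1,…,N}; equivalently, σ_{qr}(a) = N+1 − σ_{rq}^{−1}(N+1−a) for all 1 ≤ a ≤ N. -/

import Mathlib

/-- Morse numbers `i_j` of a permutation `σ` of `{1,…,N}` (extended to `ℕ`),
via the recursion `i_1 = 0`,
`i_{j+1} = i_j + (-1)^(j+1) * sign (σ⁻¹(j+1) - σ⁻¹(j))`. -/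
def morse (σ : Equiv.Perm ℕ) : ℕ → ℤ
  | 0 => 0
  | 1 => 0
  | (j+2) => morse σ (j+1) +
      (-1)^(j+2) * Int.sign ((σ.symm (j+2) : ℤ) - (σ.symm (j+1) : ℤ))

/-- Zero numbers `z_{j k}`, recursion in the first index `j`, second index `k` fixed:
`z_{1k} = 0`, `z_{kk} = i_k`, `z_{k+1,k} = min (i_k, i_{k+1})`, and otherwise
`z_{j+1,k} = z_{jk} + ((-1)^(j+1)/2) * (sign (σ⁻¹(j+1) - σ⁻¹(k)) - sign (σ⁻¹(j) - σ⁻¹(k)))`. -/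
def zrec (σ : Equiv.Perm ℕ) (k : ℕ) : ℕ → ℤ
  | 0 => 0
  | 1 => 0
  | (j+2) =>
      if j+2 = k then morse σ k
      else if j+1 = k then min (morse σ k) (morse σ (k+1))
      else zrec σ k (j+1) +
        ((-1)^(j+2) * (Int.sign ((σ.symm (j+2) : ℤ) - (σ.symm k : ℤ))
          - Int.sign ((σ.symm (j+1) : ℤ) - (σ.symm k : ℤ)))) / 2

/-- The zero number `z_{m n}`. -/
def zfun (σ : Equiv.Perm ℕ) (m n : ℕ) : ℤ := zrec σ n m

/-- The connection digraph of a dissipative Morse permutation `σ` of `{1,…,N}`: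
an edge `m ⤳ n` iff `i_m = i_n + 1` and no `w` strictly between `m` and `n`
blocks, i.e. satisfies `z_{mw} = z_{wn} = z_{mn}`. -/
def hasEdge (N : ℕ) (σ : Equiv.Perm ℕ) (m n : ℕ) : Prop :=
  1 ≤ m ∧ m ≤ N ∧ 1 ≤ n ∧ n ≤ N ∧
  morse σ m = morse σ n + 1 ∧
  ¬ ∃ w : ℕ, min m n < w ∧ w < max m n ∧
      zfun σ m w = zfun σ w n ∧ zfun σ w n = zfun σ m n

/-- A dissipative permutation of `{1,…,N}`. -/
def Dissipative (N : ℕ) (σ : Equiv.Perm ℕ) : Prop :=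
  Set.BijOn σ (Set.Icc 1 N) (Set.Icc 1 N) ∧ σ 1 = 1 ∧ σ N = N

/-- The Morse property: all Morse numbers are nonnegative. -/
def MorseProp (N : ℕ) (σ : Equiv.Perm ℕ) : Prop :=
  ∀ j, 1 ≤ j → j ≤ N → 0 ≤ morse σ j

/-- Morse counts `μ(i) = #{j ∈ {1,…,N} : i_j = i}`. -/
def morseCount (N : ℕ) (σ : Equiv.Perm ℕ) (i : ℤ) : ℕ :=
  ((Finset.Icc 1 N).filter (fun j => morse σ j = i)).card

/-- The primitive 3-nose permutation `σ_{rq}` of `{1,…,N}`, `N = 2(r+1)(q+1)-1`,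
characterized by its defining relations, extended to a permutation of `ℕ`
fixing everything outside `{1,…,N}`. -/
def SigmaRQ (r q : ℕ) (σ : Equiv.Perm ℕ) : Prop :=
  (∀ a, a ∉ Set.Icc 1 (2*(r+1)*(q+1) - 1) → σ a = a) ∧
  (∀ j k, j ≤ r → k ≤ q →
    σ (2*((q+1)*j+k)+1) = 2*(j+(r+1)*k)+1) ∧
  (∀ j k, j ≤ r → k ≤ q → ¬(j = 0 ∧ k = 0) →
    σ (2*((q+1)*(r-j)+(q-k)+1)) = 2*(j+(r+1)*k))

/-- Tags `A`, `B` of equilibrium labels `A^j_k`, `B^j_k`. -/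
inductive Tag | A | B
deriving DecidableEq

/-- The axis position (`h_1`-position) of the label `L^j_k` for parameters `(r,q)`. -/
def axisPos (r q : ℕ) : Tag → ℕ → ℕ → ℕ
  | Tag.A, j, k => if Odd j then (q+1)*(j-1)+k+1 else (q+1)*(2*r+1-j)+(q-k)+1
  | Tag.B, j, k => if Odd j then (q+1)*j+(q-k)+1 else (q+1)*(2*r-j)+k+1

/-- The meander position (`h_0`-position) of the label `L^j_k` for parameters `(r,q)`. -/
def meanderPos (r q : ℕ) : Tag → ℕ → ℕ → ℕ
  | Tag.A, j, k => if Odd k then (r+1)*(2*q+1-k)+(2*r+1-j) else (r+1)*k+j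
  | Tag.B, j, k => if Odd k then (r+1)*(2*q+1-k)+j else (r+1)*(k+1)+(r-j)

/-- The suspension `σ̃` of a dissipative permutation `σ` of `{1,…,N}`:
`σ̃(1) = 1`, `σ̃(N+2) = N+2`, and `σ̃(a+1) = N+2 - σ(a)` for `1 ≤ a ≤ N`. -/
def IsSuspension (N : ℕ) (σ σt : Equiv.Perm ℕ) : Prop :=
  σt 1 = 1 ∧ σt (N+2) = N+2 ∧ ∀ a, 1 ≤ a → a ≤ N → σt (a+1) = N+2 - σ a

/-- The label `A^0_0` is the distinguished (formal) vertex `⋆`. -/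
def IsStar (L : Tag) (j k : ℕ) : Prop := L = Tag.A ∧ j = 0 ∧ k = 0

/-- Tag swap `A ↔ B`, used by the reversor. -/
def tagSwap : Tag → Tag
  | Tag.A => Tag.B
  | Tag.B => Tag.A

/-!
Index the points of the grid `{0,…,r} × {0,…,q}` lexicographically, either with the first
coordinate leading or with the second. On odd positions `σ_{rq}` passes from the first indexing to
the second, and `σ_{rq} ∘ κ` does the same on even positions. Interchanging `r` and `q` reverses
this passage. On odd positions `κ` acts as the point reflection `(j, k) ↦ (r - j, q - k)` of the
grid in either indexing, so it commutes with the passage. Hence `σ_{qr} ∘ κ ∘ σ_{rq} = κ` on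
`{1,…,N}`.
-/

/-- The flip involution `κ(a) = N + 1 - a` of `{1,…,N}`, where `N + 1 = 2(r + 1)(q + 1)`. The
subtraction is truncated, so `κ` is an involution only on `{0,…,N+1}`. -/
def kappa (r q a : ℕ) : ℕ := 2 * (r + 1) * (q + 1) - a

theorem kappa_comm (r q a : ℕ) : kappa q r a = kappa r q a := by
  simp only [kappa, mul_right_comm]

theorem kappa_kappa {r q a : ℕ} (ha : a ≤ 2 * (r + 1) * (q + 1)) : kappa r q (kappa r q a) = a :=
  Nat.sub_sub_self ha

theorem kappa_mem_Icc {r q a : ℕ} (ha : a ∈ Set.Icc 1 (2 * (r + 1) * (q + 1) - 1)) :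
    kappa r q a ∈ Set.Icc 1 (2 * (r + 1) * (q + 1) - 1) := by
  simp only [Set.mem_Icc, kappa] at ha ⊢
  omega

/-- The lexicographic index of the grid point `(j, k)` when `k` runs through `{0,…,q}`. The index
with `k` leading, where `j` runs through `{0,…,r}`, is `lexIndex r k j`. -/
def lexIndex (q j k : ℕ) : ℕ := (q + 1) * j + k

theorem exists_lexIndex_eq {r q m : ℕ} (hm : m < (r + 1) * (q + 1)) :
    ∃ j ≤ r, ∃ k ≤ q, lexIndex q j k = m :=
  ⟨m / (q + 1), Nat.lt_succ_iff.mp (Nat.div_lt_of_lt_mul (by rwa [mul_comm])),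
    m % (q + 1), Nat.lt_succ_iff.mp (Nat.mod_lt m q.succ_pos), Nat.div_add_mod m (q + 1)⟩

section Reflection

variable {r q j k : ℕ}

theorem lexIndex_add_lexIndex_reflect (hj : j ≤ r) (hk : k ≤ q) :
    lexIndex q j k + lexIndex q (r - j) (q - k) + 1 = (r + 1) * (q + 1) := by
  obtain ⟨j', rfl⟩ := Nat.exists_eq_add_of_le hj
  obtain ⟨k', rfl⟩ := Nat.exists_eq_add_of_le hk
  simp only [lexIndex, Nat.add_sub_cancel_left]
  ring

theorem kappa_two_mul_lexIndex (hj : j ≤ r) (hk : k ≤ q) :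
    kappa r q (2 * lexIndex q j k) = 2 * (lexIndex q (r - j) (q - k) + 1) := by
  rw [kappa, mul_assoc, ← lexIndex_add_lexIndex_reflect hj hk]
  omega

theorem kappa_two_mul_lexIndex_add_one (hj : j ≤ r) (hk : k ≤ q) :
    kappa r q (2 * lexIndex q j k + 1) = 2 * lexIndex q (r - j) (q - k) + 1 := by
  rw [kappa, mul_assoc, ← lexIndex_add_lexIndex_reflect hj hk]
  omega

end Reflection

theorem exists_eq_two_mul_lexIndex_add_one_or_eq_kappa {r q b : ℕ}
    (hb : b ∈ Set.Icc 1 (2 * (r + 1) * (q + 1) - 1)) :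
    ∃ j ≤ r, ∃ k ≤ q, b = 2 * lexIndex q j k + 1 ∨
      ¬(j = 0 ∧ k = 0) ∧ b = kappa r q (2 * lexIndex q j k) := by
  rw [Set.mem_Icc, mul_assoc] at hb
  rcases Nat.even_or_odd' b with ⟨c, rfl | rfl⟩
  · obtain ⟨j, hj, k, hk, hjk⟩ :=
      exists_lexIndex_eq (show (r + 1) * (q + 1) - c < (r + 1) * (q + 1) by omega)
    refine ⟨j, hj, k, hk, .inr ⟨?_, ?_⟩⟩
    · rintro ⟨rfl, rfl⟩
      simp only [lexIndex, mul_zero, add_zero] at hjk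
      omega
    · rw [hjk, kappa, mul_assoc]
      omega
  · obtain ⟨j, hj, k, hk, rfl⟩ := exists_lexIndex_eq (show c < (r + 1) * (q + 1) by omega)
    exact ⟨j, hj, k, hk, .inl rfl⟩

namespace SigmaRQ

variable {r q : ℕ} {σ : Equiv.Perm ℕ}

theorem apply_two_mul_lexIndex_add_one (hσ : SigmaRQ r q σ) {j k : ℕ} (hj : j ≤ r) (hk : k ≤ q) :
    σ (2 * lexIndex q j k + 1) = 2 * lexIndex r k j + 1 := by
  simpa only [lexIndex, add_comm j] using hσ.2.1 j k hj hk

theorem apply_kappa_two_mul_lexIndex (hσ : SigmaRQ r q σ) {j k : ℕ} (hj : j ≤ r) (hk : k ≤ q)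
    (hjk : ¬(j = 0 ∧ k = 0)) :
    σ (kappa r q (2 * lexIndex q j k)) = 2 * lexIndex r k j := by
  rw [kappa_two_mul_lexIndex hj hk]
  simpa only [lexIndex, add_comm j] using hσ.2.2 j k hj hk hjk

theorem symm_apply_mem_Icc (hσ : SigmaRQ r q σ) {a : ℕ}
    (ha : a ∈ Set.Icc 1 (2 * (r + 1) * (q + 1) - 1)) :
    σ.symm a ∈ Set.Icc 1 (2 * (r + 1) * (q + 1) - 1) := by
  by_contra hout
  have hfix : a = σ.symm a := by simpa only [Equiv.apply_symm_apply] using hσ.1 _ hout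
  exact hout (hfix ▸ ha)

theorem apply_kappa_apply {σ' : Equiv.Perm ℕ} (hσ : SigmaRQ r q σ) (hσ' : SigmaRQ q r σ') {b : ℕ}
    (hb : b ∈ Set.Icc 1 (2 * (r + 1) * (q + 1) - 1)) :
    σ' (kappa r q (σ b)) = kappa r q b := by
  obtain ⟨j, hj, k, hk, rfl | ⟨hjk, rfl⟩⟩ := exists_eq_two_mul_lexIndex_add_one_or_eq_kappa hb
  · calc σ' (kappa r q (σ (2 * lexIndex q j k + 1)))
        = σ' (kappa q r (2 * lexIndex r k j + 1)) := by
          rw [hσ.apply_two_mul_lexIndex_add_one hj hk, kappa_comm]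
      _ = σ' (2 * lexIndex r (q - k) (r - j) + 1) := by
          rw [kappa_two_mul_lexIndex_add_one hk hj]
      _ = 2 * lexIndex q (r - j) (q - k) + 1 :=
          hσ'.apply_two_mul_lexIndex_add_one (q.sub_le k) (r.sub_le j)
      _ = kappa r q (2 * lexIndex q j k + 1) := (kappa_two_mul_lexIndex_add_one hj hk).symm
  · have hle : 2 * lexIndex q j k ≤ 2 * (r + 1) * (q + 1) := by
      rw [mul_assoc, ← lexIndex_add_lexIndex_reflect hj hk]
      omega
    calc σ' (kappa r q (σ (kappa r q (2 * lexIndex q j k))))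
        = σ' (kappa q r (2 * lexIndex r k j)) := by
          rw [hσ.apply_kappa_two_mul_lexIndex hj hk hjk, kappa_comm]
      _ = 2 * lexIndex q j k := hσ'.apply_kappa_two_mul_lexIndex hk hj (mt And.symm hjk)
      _ = kappa r q (kappa r q (2 * lexIndex q j k)) := (kappa_kappa hle).symm

end SigmaRQ

/-- trivial equivalence `σ_{qr} = κ ∘ σ_{rq}⁻¹ ∘ κ`, i.e.
`σ_{qr}(a) = N+1 - σ_{rq}⁻¹(N+1-a)` for all `1 ≤ a ≤ N`. -/
theorem stmt_5 (r q : ℕ) (hr : 1 ≤ r) (hq : 1 ≤ q)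
    (σ σ' : Equiv.Perm ℕ) (hσ : SigmaRQ r q σ) (hσ' : SigmaRQ q r σ') :
    ∀ a, 1 ≤ a → a ≤ 2*(r+1)*(q+1)-1 →
      σ' a = 2*(r+1)*(q+1) - σ.symm (2*(r+1)*(q+1) - a) := by
  intro a ha₁ ha₂
  have ha : a ∈ Set.Icc 1 (2 * (r + 1) * (q + 1) - 1) := ⟨ha₁, ha₂⟩
  calc σ' a = σ' (kappa r q (σ (σ.symm (kappa r q a)))) := by
        rw [Equiv.apply_symm_apply, kappa_kappa (ha₂.trans (Nat.sub_le _ _))]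
    _ = kappa r q (σ.symm (kappa r q a)) :=
        hσ.apply_kappa_apply hσ' (hσ.symm_apply_mem_Icc (kappa_mem_Icc ha))
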